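/- Let X, Y be real Banach spaces, Ω ⊆ X open nonempty, f : Ω → Y, x₀ ∈ Ω and c > 0. Assume f is differentiable with Lipschitz continuous derivative on int B(x₀, r₀) ⊆ Ω for some r₀ > 0, Df(x₀) is surjective, and reg(f, x₀) · lip(Df, int B(x₀, r₀)) / 8 < c. Then there exists ρ > 0 such that for every S ∈ U_c(X) with S ⊆ B(x₀, ρ) and f(S) closed, and for every closed convex cone C ⊆ Y with apex at the origin, the mapping f is convex-like on S with respect to C: for every x₁, x₂ ∈ S and t ∈ [0,1] there exists x_t ∈ S such that (1−t)f(x₁) + t f(x₂) ∈ f(x_t) + C. -/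

import Mathlib

open Metric Set
open scoped NNReal ENNReal

/-- The modulus of convexity of a set `S` in a real normed space:
`δ_S(ε) = sup{δ ≥ 0 : B((x₁+x₂)/2, δ) ⊆ S for all x₁, x₂ ∈ S with ‖x₁ − x₂‖ = ε}`. -/
noncomputable def setModulus {X : Type*} [NormedAddCommGroup X] [NormedSpace ℝ X]
    (S : Set X) (ε : ℝ) : ℝ :=
  sSup {δ : ℝ | 0 ≤ δ ∧ ∀ x₁ ∈ S, ∀ x₂ ∈ S, ‖x₁ - x₂‖ = ε →
    closedBall (midpoint ℝ x₁ x₂) δ ⊆ S}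

/-- The exact bound of Lipschitz continuity of `h` on `U`:
the infimum of all Lipschitz constants of `h` on `U`. -/
noncomputable def lipOn {α β : Type*} [PseudoMetricSpace α] [PseudoMetricSpace β]
    (h : α → β) (U : Set α) : ℝ :=
  sInf {ℓ : ℝ | 0 ≤ ℓ ∧ ∀ x₁ ∈ U, ∀ x₂ ∈ U, dist (h x₁) (h x₂) ≤ ℓ * dist x₁ x₂}

/-- The exact regularity bound of `f` around `x₀`: the infimum of all `κ ≥ 0` such that,
for some `δ > 0`, `dist(x, f⁻¹(y)) ≤ κ‖y − f(x)‖` for all `x ∈ B(x₀, δ)`, `y ∈ B(f(x₀), δ)`;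
it equals `+∞` when `f` is not metrically regular around `x₀`. -/
noncomputable def regBound {X Y : Type*} [NormedAddCommGroup X] [NormedAddCommGroup Y]
    (f : X → Y) (x₀ : X) : ℝ≥0∞ :=
  sInf (ENNReal.ofReal '' {κ : ℝ | 0 ≤ κ ∧ ∃ δ > 0,
    ∀ x ∈ closedBall x₀ δ, ∀ y ∈ closedBall (f x₀) δ,
      Metric.infDist x {x' | f x' = y} ≤ κ * ‖y - f x‖})

/-- `S ∈ U_c(X)`: `S` is a nonempty closed convex set whose modulus of convexity
satisfies `δ_S(ε) ≥ cε²` for all `ε ∈ (0, diam S)`. -/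
def UniformlyConvexWith {X : Type*} [NormedAddCommGroup X] [NormedSpace ℝ X]
    (c : ℝ) (S : Set X) : Prop :=
  S.Nonempty ∧ IsClosed S ∧ Convex ℝ S ∧
    ∀ ε : ℝ, 0 < ε → ε < Metric.diam S → c * ε ^ 2 ≤ setModulus S ε

/-- The modulus of convexity of a normed space
`δ_X(ε) = inf{1 − ‖(x₁+x₂)/2‖ : x₁, x₂ ∈ B̄(0,1), ‖x₁ − x₂‖ = ε}`. -/
noncomputable def spaceModulus (X : Type*) [NormedAddCommGroup X] [NormedSpace ℝ X]
    (ε : ℝ) : ℝ :=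
  sInf {d : ℝ | ∃ x₁ ∈ closedBall (0 : X) 1, ∃ x₂ ∈ closedBall (0 : X) 1,
    ‖x₁ - x₂‖ = ε ∧ d = 1 - ‖midpoint ℝ x₁ x₂‖}

/-- `S` is `r`-convex (strongly convex of radius `r`): a nonempty intersection
`⋂_{x ∈ M} B̄(x, r)` for some `M ⊊ X`. -/
def RConvex {X : Type*} [NormedAddCommGroup X] (r : ℝ) (S : Set X) : Prop :=
  S.Nonempty ∧ ∃ M : Set X, M ≠ Set.univ ∧ S = ⋂ x ∈ M, closedBall x r

/-- `f` is open at a linear rate around `x₀`. -/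
def OpenAtLinearRate {X Y : Type*} [PseudoMetricSpace X] [PseudoMetricSpace Y]
    (f : X → Y) (x₀ : X) : Prop :=
  ∃ δ > (0 : ℝ), ∃ ζ > (0 : ℝ), ∃ σ > (0 : ℝ), ∀ x ∈ closedBall x₀ δ, ∀ r ∈ Icc (0 : ℝ) δ,
    closedBall (f x) (σ * r) ∩ closedBall (f x₀) ζ ⊆ f '' closedBall x r

theorem aux_mid_convex {Y : Type*} [NormedAddCommGroup Y] [NormedSpace ℝ Y] (A : Set Y)
    (hA : IsClosed A) (hm : ∀ a ∈ A, ∀ b ∈ A, midpoint ℝ a b ∈ A) (a b : Y) (ha : a ∈ A)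
    (hb : b ∈ A) (t : ℝ) (ht : t ∈ Icc (0:ℝ) 1) : (1 - t) • a + t • b ∈ A := by
  set g : ℝ → Y := fun s => (1 - s) • a + s • b with hg
  have hgc : Continuous g := by fun_prop
  have hgm : ∀ u v, g ((u+v)/2) = midpoint ℝ (g u) (g v) := by
    intro u v
    simp only [hg, midpoint_eq_smul_add, invOf_eq_inv]
    module
  set T := g ⁻¹' A with hT
  have hTc : IsClosed T := hA.preimage hgc
  have h0 : (0:ℝ) ∈ T := by simp [hT, hg, ha]
  have h1 : (1:ℝ) ∈ T := by simp [hT, hg, hb]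
  have hTm : ∀ u ∈ T, ∀ v ∈ T, (u+v)/2 ∈ T := by
    intro u hu v hv
    simp only [hT, mem_preimage, hgm]
    exact hm _ hu _ hv
  by_contra hcon
  have htT : t ∉ T := hcon
  have hK1 : IsCompact (T ∩ Icc 0 t) := isCompact_Icc.inter_left hTc
  have hK2 : IsCompact (T ∩ Icc t 1) := isCompact_Icc.inter_left hTc
  obtain ⟨u, hu, hu'⟩ := hK1.exists_isGreatest ⟨0, h0, le_refl _, ht.1⟩
  obtain ⟨v, hv, hv'⟩ := hK2.exists_isLeast ⟨1, h1, ht.2, le_refl _⟩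
  have hut : u < t := lt_of_le_of_ne hu.2.2 (fun h => htT (h ▸ hu.1))
  have hvt : t < v := lt_of_le_of_ne hv.2.1 (fun h => htT (h ▸ hv.1))
  have hw := hTm u hu.1 v hv.1
  have hu0 := hu.2.1
  have hv1 := hv.2.2
  rcases le_total ((u+v)/2) t with h | h
  · have := hu' ⟨hw, by linarith, h⟩
    linarith
  · have := hv' ⟨hw, h, by linarith⟩
    linarith

theorem aux_taylor {X Y : Type*} [NormedAddCommGroup X] [NormedSpace ℝ X]
    [NormedAddCommGroup Y] [NormedSpace ℝ Y] (f : X → Y) (U : Set X) (L : ℝ)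
    (hU : Convex ℝ U)
    (hd : ∀ x ∈ U, DifferentiableAt ℝ f x)
    (hL : ∀ x ∈ U, ∀ y ∈ U, dist (fderiv ℝ f x) (fderiv ℝ f y) ≤ L * dist x y)
    (x h : X) (hx : x ∈ U) (hxh : x + h ∈ U) :
    ‖f (x + h) - f x - fderiv ℝ f x h‖ ≤ L / 2 * ‖h‖ ^ 2 := by
  have hmem : ∀ t ∈ Icc (0:ℝ) 1, x + t • h ∈ U := by
    intro t ht
    have := hU.add_smul_sub_mem hx hxh ht
    simpa using this
  have hder : ∀ t ∈ Icc (0:ℝ) 1, HasDerivAt (fun s : ℝ => f (x + s • h) - f x - s • fderiv ℝ f x h)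
      (fderiv ℝ f (x + t • h) h - fderiv ℝ f x h) t := by
    intro t ht
    have h1 : HasDerivAt (fun s : ℝ => x + s • h) h t := by
      simpa using ((hasDerivAt_id t).smul_const h).const_add x
    have h2 := (hd _ (hmem t ht)).hasFDerivAt.comp_hasDerivAt t h1
    have h3 : HasDerivAt (fun s : ℝ => s • fderiv ℝ f x h) (fderiv ℝ f x h) t := by
      simpa using ((hasDerivAt_id t).smul_const (fderiv ℝ f x h))
    exact (h2.sub_const (f x)).sub h3
  have key := image_norm_le_of_norm_deriv_right_le_deriv_boundary
    (f := fun s : ℝ => f (x + s • h) - f x - s • fderiv ℝ f x h)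
    (f' := fun t => fderiv ℝ f (x + t • h) h - fderiv ℝ f x h) (a := 0) (b := 1)
    (fun t ht => (hder t ht).continuousAt.continuousWithinAt)
    (fun t ht => (hder t ⟨ht.1, ht.2.le⟩).hasDerivWithinAt)
    (B := fun t => L / 2 * ‖h‖ ^ 2 * t ^ 2) (B' := fun t => L * ‖h‖ ^ 2 * t)
    (by simp)
    (fun t => by
      have := (hasDerivAt_pow 2 t).const_mul (L / 2 * ‖h‖ ^ 2)
      have e : L / 2 * ‖h‖ ^ 2 * (((2:ℕ) : ℝ) * t ^ (2 - 1)) = L * ‖h‖ ^ 2 * t := by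
        push_cast
        ring
      rw [e] at this
      exact this)
    (fun t ht => by
      have hb := hL _ (hmem t ⟨ht.1, ht.2.le⟩) _ hx
      rw [dist_eq_norm, dist_eq_norm, add_sub_cancel_left, norm_smul, Real.norm_of_nonneg ht.1] at hb
      rw [← sub_apply]
      calc _ ≤ _ := ContinuousLinearMap.le_opNorm _ _
        _ ≤ (L * (t * ‖h‖)) * ‖h‖ := by gcongr
        _ = _ := by ring)
  have := key (right_mem_Icc.2 zero_le_one)
  simpa using this

theorem aux_mid {X Y : Type*} [NormedAddCommGroup X] [NormedSpace ℝ X]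
    [NormedAddCommGroup Y] [NormedSpace ℝ Y] (f : X → Y) (U : Set X) (L : ℝ)
    (hU : Convex ℝ U)
    (hd : ∀ x ∈ U, DifferentiableAt ℝ f x)
    (hL : ∀ x ∈ U, ∀ y ∈ U, dist (fderiv ℝ f x) (fderiv ℝ f y) ≤ L * dist x y)
    (x₁ x₂ : X) (h₁ : x₁ ∈ U) (h₂ : x₂ ∈ U) :
    ‖midpoint ℝ (f x₁) (f x₂) - f (midpoint ℝ x₁ x₂)‖ ≤ L / 8 * ‖x₁ - x₂‖ ^ 2 := by
  have hm : midpoint ℝ x₁ x₂ ∈ U := hU.midpoint_mem h₁ h₂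
  set m := midpoint ℝ x₁ x₂ with hmdef
  set h : X := (1/2 : ℝ) • (x₁ - x₂) with hh
  have e1 : m + h = x₁ := by
    rw [hmdef, hh, midpoint_eq_smul_add, invOf_eq_inv]; module
  have e2 : m + -h = x₂ := by
    rw [hmdef, hh, midpoint_eq_smul_add, invOf_eq_inv]; module
  have t1 := aux_taylor f U L hU hd hL m h hm (e1 ▸ h₁)
  have t2 := aux_taylor f U L hU hd hL m (-h) hm (e2 ▸ h₂)
  rw [e1] at t1
  rw [e2, norm_neg, map_neg] at t2
  have hn : ‖h‖ = ‖x₁ - x₂‖ / 2 := by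
    rw [hh, norm_smul]; norm_num; ring
  have e : midpoint ℝ (f x₁) (f x₂) - f m = (1/2 : ℝ) •
      ((f x₁ - f m - fderiv ℝ f m h) + (f x₂ - f m - -fderiv ℝ f m h)) := by
    rw [midpoint_eq_smul_add, invOf_eq_inv]; module
  rw [e, norm_smul]
  have t3 := norm_add_le (f x₁ - f m - fderiv ℝ f m h) (f x₂ - f m - -fderiv ℝ f m h)
  rw [hn] at t1 t2
  rw [Real.norm_of_nonneg (by norm_num)]
  nlinarith

theorem aux_ball {X : Type*} [NormedAddCommGroup X] [NormedSpace ℝ X] (c : ℝ) (hc : 0 < c)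
    (S : Set X) (hS : UniformlyConvexWith c S) (hb : Bornology.IsBounded S)
    (x₁ x₂ : X) (h₁ : x₁ ∈ S) (h₂ : x₂ ∈ S) (r : ℝ) (hr : r < c * ‖x₁ - x₂‖ ^ 2) :
    closedBall (midpoint ℝ x₁ x₂) r ⊆ S := by
  obtain ⟨-, -, hconv, hmod⟩ := hS
  rcases lt_or_ge r 0 with hr0 | hr0
  · rw [closedBall_eq_empty.2 hr0]; exact empty_subset _
  set ε := ‖x₁ - x₂‖ with hε
  have hεpos : 0 < ε := by
    rcases (norm_nonneg (x₁ - x₂)).lt_or_eq with h | h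
    · exact h
    · rw [hε, ← h] at hr; simp at hr; linarith
  have hεd : ε ≤ Metric.diam S := by
    rw [hε, ← dist_eq_norm]; exact dist_le_diam_of_mem hb h₁ h₂
  -- find s small
  have hcont : Filter.Tendsto (fun s : ℝ => c * ((1 - s) * ε) ^ 2 - (r + s * ε / 2)) (nhdsWithin 0 (Ioi 0))
      (nhds (c * ((1 - 0) * ε) ^ 2 - (r + 0 * ε / 2))) := by
    apply tendsto_nhdsWithin_of_tendsto_nhds
    exact Continuous.tendsto (by fun_prop) 0
  have hev := hcont.eventually (lt_mem_nhds (a := 0) (by simp; linarith))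
  have hev2 : ∀ᶠ s : ℝ in nhdsWithin 0 (Ioi 0), s ∈ Ioo (0:ℝ) 1 :=
    Ioo_mem_nhdsGT one_pos
  obtain ⟨s, hs, hs0, hs1⟩ := (hev.and hev2).exists
  set x₁' : X := (1 - s) • x₁ + s • x₂ with hx'
  have hx'S : x₁' ∈ S := hconv h₁ h₂ (by linarith) hs0.le (by ring)
  have hn : ‖x₁' - x₂‖ = (1 - s) * ε := by
    have : x₁' - x₂ = (1 - s) • (x₁ - x₂) := by rw [hx']; module
    rw [this, norm_smul, Real.norm_of_nonneg (by linarith)]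
  have hp : 0 < (1 - s) * ε := mul_pos (by linarith) hεpos
  have hm := hmod ((1 - s) * ε) hp (lt_of_lt_of_le (by nlinarith) hεd)
  have hlt : r + s * ε / 2 < setModulus S ((1 - s) * ε) := by linarith
  have hne : {δ : ℝ | 0 ≤ δ ∧ ∀ x₁ ∈ S, ∀ x₂ ∈ S, ‖x₁ - x₂‖ = (1 - s) * ε →
    closedBall (midpoint ℝ x₁ x₂) δ ⊆ S}.Nonempty := by
    by_contra hne
    rw [not_nonempty_iff_eq_empty] at hne
    rw [setModulus, hne, Real.sSup_empty] at hm
    have : 0 < c * ((1 - s) * ε) ^ 2 := by positivity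
    linarith
  obtain ⟨δ, hδ, hδ'⟩ := exists_lt_of_lt_csSup hne hlt
  refine subset_trans (closedBall_subset_closedBall' ?_) (hδ.2 x₁' hx'S x₂ h₂ hn)
  have : dist (midpoint ℝ x₁ x₂) (midpoint ℝ x₁' x₂) = s * ε / 2 := by
    rw [dist_eq_norm]
    have : midpoint ℝ x₁ x₂ - midpoint ℝ x₁' x₂ = (s / 2) • (x₁ - x₂) := by
      rw [hx', midpoint_eq_smul_add, midpoint_eq_smul_add, invOf_eq_inv]; module
    rw [this, norm_smul, Real.norm_of_nonneg (by linarith)]; ring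
  linarith

/-- Corollary 3.5 of the paper: near a regular point, a `C^{1,1}` mapping is
convex-like on uniformly convex sets of class `U_c(X)`, with respect to any
closed convex cone. -/
theorem convex_like_on_uniformly_convex_sets
    {X Y : Type*} [NormedAddCommGroup X] [NormedSpace ℝ X] [CompleteSpace X]
    [NormedAddCommGroup Y] [NormedSpace ℝ Y] [CompleteSpace Y]
    (Ω : Set X) (hΩopen : IsOpen Ω) (hΩne : Ω.Nonempty)
    (f : X → Y) (x₀ : X) (hx₀ : x₀ ∈ Ω) (c : ℝ) (hc : 0 < c)
    (r₀ : ℝ) (hr₀ : 0 < r₀) (hballΩ : ball x₀ r₀ ⊆ Ω)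
    (hdiff : ∀ x ∈ ball x₀ r₀, DifferentiableAt ℝ f x)
    (hlip : ∃ K : ℝ≥0, LipschitzOnWith K (fderiv ℝ f) (ball x₀ r₀))
    (hsurj : Function.Surjective (fderiv ℝ f x₀))
    (hreg : regBound f x₀ * ENNReal.ofReal (lipOn (fderiv ℝ f) (ball x₀ r₀)) / 8
      < ENNReal.ofReal c) :
    ∃ ρ : ℝ, 0 < ρ ∧ ∀ S : Set X, UniformlyConvexWith c S →
      S ⊆ closedBall x₀ ρ → IsClosed (f '' S) →
      ∀ C : Set Y, IsClosed C → Convex ℝ C → (0 : Y) ∈ C →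
        (∀ t : ℝ, 0 ≤ t → ∀ y ∈ C, t • y ∈ C) →
        ∀ x₁ ∈ S, ∀ x₂ ∈ S, ∀ t ∈ Icc (0 : ℝ) 1,
          ∃ xt ∈ S, ∃ yc ∈ C, (1 - t) • f x₁ + t • f x₂ = f xt + yc := by
  obtain ⟨K, hK⟩ := hlip
  set L := lipOn (fderiv ℝ f) (ball x₀ r₀) with hLdef
  have hL0 : 0 ≤ L := Real.sInf_nonneg (fun _ h => h.1)
  have hL : ∀ x ∈ ball x₀ r₀, ∀ y ∈ ball x₀ r₀,
      dist (fderiv ℝ f x) (fderiv ℝ f y) ≤ L * dist x y := by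
    intro x hx y hy
    rcases (dist_nonneg (x := x) (y := y)).lt_or_eq with h | h
    · rw [← div_le_iff₀ h]
      apply le_csInf
      · exact ⟨K, K.2, fun a ha b hb => hK.dist_le_mul a ha b hb⟩
      · intro ℓ hℓ
        rw [div_le_iff₀ h]
        exact hℓ.2 x hx y hy
    · rw [dist_eq_zero.1 h.symm]; simp
  have hconvB := convex_ball x₀ r₀
  have hx₀B : x₀ ∈ ball x₀ r₀ := mem_ball_self hr₀
  have hBn : ball x₀ r₀ ∈ nhds x₀ := ball_mem_nhds _ hr₀
  have hfc : ContinuousAt f x₀ := (hdiff x₀ hx₀B).continuousAt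
  -- it suffices to treat midpoints
  suffices hmain : ∃ ρ : ℝ, 0 < ρ ∧ ∀ S : Set X, UniformlyConvexWith c S →
      S ⊆ closedBall x₀ ρ → ∀ x₁ ∈ S, ∀ x₂ ∈ S, midpoint ℝ (f x₁) (f x₂) ∈ f '' S by
    obtain ⟨ρ, hρ, H⟩ := hmain
    refine ⟨ρ, hρ, fun S hS hSρ hcl C _ _ hC0 _ x₁ h₁ x₂ h₂ t ht => ?_⟩
    obtain ⟨xt, hxt, he⟩ := aux_mid_convex (f '' S) hcl (by
      rintro _ ⟨a, ha, rfl⟩ _ ⟨b, hb, rfl⟩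
      exact H S hS hSρ a ha b hb) (f x₁) (f x₂) ⟨x₁, h₁, rfl⟩ ⟨x₂, h₂, rfl⟩ t ht
    exact ⟨xt, hxt, 0, hC0, by rw [he, add_zero]⟩
  rcases hL0.eq_or_lt with hLz | hLpos
  · refine ⟨r₀ / 2, by linarith, fun S hS hSρ x₁ h₁ x₂ h₂ => ?_⟩
    have hSB : S ⊆ ball x₀ r₀ := hSρ.trans (closedBall_subset_ball (by linarith))
    have := aux_mid f _ L hconvB hdiff hL x₁ x₂ (hSB h₁) (hSB h₂)
    rw [← hLz] at this
    simp only [zero_div, zero_mul] at this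
    exact ⟨_, hS.2.2.1.midpoint_mem h₁ h₂, (sub_eq_zero.1 (norm_le_zero_iff.1 this)).symm⟩
  have hκ : ∃ κ : ℝ, 0 ≤ κ ∧ κ * L / 8 < c ∧ ∃ δ > 0,
    ∀ x ∈ closedBall x₀ δ, ∀ y ∈ closedBall (f x₀) δ,
      Metric.infDist x {x' | f x' = y} ≤ κ * ‖y - f x‖ := by
    have h1 : regBound f x₀ < ENNReal.ofReal (8 * c / L) := by
      by_contra hcon
      push Not at hcon
      have : ENNReal.ofReal c ≤ regBound f x₀ * ENNReal.ofReal L / 8 := by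
        calc ENNReal.ofReal c = ENNReal.ofReal (8 * c / L) * ENNReal.ofReal L / 8 := by
              rw [← ENNReal.ofReal_mul (by positivity)]
              have : (8 : ℝ≥0∞) = ENNReal.ofReal 8 := by norm_num
              rw [this, ← ENNReal.ofReal_div_of_pos (by norm_num)]
              congr 1
              field_simp
          _ ≤ _ := by gcongr
      exact absurd hreg (not_lt.2 this)
    rw [regBound, sInf_lt_iff] at h1
    obtain ⟨_, ⟨κ, ⟨hκ0, hδ⟩, rfl⟩, hlt⟩ := h1
    refine ⟨κ, hκ0, ?_, hδ⟩
    have h2 := (ENNReal.ofReal_lt_ofReal_iff (by positivity)).1 hlt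
    rw [lt_div_iff₀ hLpos] at h2
    linarith
  obtain ⟨κ, hκ0, hκc, δ, hδ, hmr⟩ := hκ
  have hstrict : HasStrictFDerivAt f (fderiv ℝ f x₀) x₀ := by
    apply hasStrictFDerivAt_of_hasFDerivAt_of_continuousAt
    · filter_upwards [hBn] with x hx using (hdiff x hx).hasFDerivAt
    · exact hK.continuousOn.continuousAt hBn
  have hmap := hstrict.map_nhds_eq_of_surj (LinearMap.range_eq_top.2 hsurj)
  have hrange : range f ∈ nhds (f x₀) := by
    rw [← hmap]; exact Filter.mem_map.2 (by simp)
  obtain ⟨η, hη, hηr⟩ := Metric.nhds_basis_closedBall.mem_iff.1 hrange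
  have hδη : 0 < min δ η := lt_min hδ hη
  obtain ⟨ρ₁, hρ₁, hρf⟩ := Metric.nhds_basis_closedBall.mem_iff.1
    (hfc.preimage_mem_nhds (closedBall_mem_nhds (f x₀) hδη))
  refine ⟨min (r₀ / 2) (min δ ρ₁), by positivity, fun S hS hSρ x₁ h₁ x₂ h₂ => ?_⟩
  have hSB : S ⊆ ball x₀ r₀ := hSρ.trans (closedBall_subset_ball (by
    have := min_le_left (r₀ / 2) (min δ ρ₁); linarith))
  have hSδ : S ⊆ closedBall x₀ δ := hSρ.trans (closedBall_subset_closedBall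
    ((min_le_right _ _).trans (min_le_left _ _)))
  have hSf : ∀ x ∈ S, f x ∈ closedBall (f x₀) (min δ η) := fun x hx =>
    hρf (closedBall_subset_closedBall ((min_le_right _ _).trans (min_le_right _ _)) (hSρ hx))
  have hest := aux_mid f _ L hconvB hdiff hL x₁ x₂ (hSB h₁) (hSB h₂)
  have hmS := hS.2.2.1.midpoint_mem h₁ h₂
  have hy := (convex_closedBall (f x₀) (min δ η)).midpoint_mem (hSf x₁ h₁) (hSf x₂ h₂)
  rcases eq_or_ne x₁ x₂ with he | hne
  · subst he
    exact ⟨x₁, h₁, by simp⟩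
  have hεpos : 0 < ‖x₁ - x₂‖ := norm_pos_iff.2 (sub_ne_zero.2 hne)
  set y := midpoint ℝ (f x₁) (f x₂)
  obtain ⟨z, hz⟩ := hηr (closedBall_subset_closedBall (min_le_right _ _) hy)
  have h3 := hmr _ (hSδ hmS) y (closedBall_subset_closedBall (min_le_left _ _) hy)
  have h4 : Metric.infDist (midpoint ℝ x₁ x₂) {x' | f x' = y} < c * ‖x₁ - x₂‖ ^ 2 := by
    calc _ ≤ _ := h3
      _ ≤ κ * (L / 8 * ‖x₁ - x₂‖ ^ 2) := by gcongr
      _ = κ * L / 8 * ‖x₁ - x₂‖ ^ 2 := by ring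
      _ < _ := by gcongr
  obtain ⟨x, hx, hd⟩ := (Metric.infDist_lt_iff ⟨z, hz⟩).1 h4
  refine ⟨x, aux_ball c hc S hS (isBounded_closedBall.subset hSρ) x₁ x₂ h₁ h₂ _ hd ?_, hx⟩
  rw [mem_closedBall, dist_comm]
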